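/- arXiv:1507.05103 — 2 statements merged into one kernel-verified Lean document; each statement's English description precedes it below -/
import Mathlib

section
/- Assume n ≥ 3. Let 1 ≤ i ≤ k−1 and let v be a vertex of the hierarchical graph H_{n,k} of the form v = x_1…x_i 0…0 with x_i ≠ 0 (i.e., the i-th coordinate of v is nonzero and all coordinates after the i-th are zero). Then the clustering coefficient of v equals (n−2)^2 / ((n−1)^{k−i+1} + (n−1)^2 − 3n + 4), as an equality of rational numbers. -/
/-!
Write `m = n - 1` and `L = k - i`. The neighbours of `v = x_1…x_i 0…0` are of two kinds:

* the *descendants*, which keep an initial segment of `v` of some length `t` with `i ≤ t < k` and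
  are nonzero afterwards; there are `m S` of them, where `S = 1 + m + ⋯ + m ^ (L - 1)`;
* the *siblings*, obtained from `v` by changing `x_i` to another nonzero value; there are `m - 1`.

No descendant is adjacent to a sibling, two descendants are adjacent exactly when they differ only
in the last coordinate, and any two siblings are adjacent. So the neighbourhood of `v` is a disjoint
union of `S` cliques of size `m` and one clique of size `m - 1`. Summing degrees inside the
neighbourhood gives `2 ε_v = m S (m - 1) + (m - 1) (m - 2) = (m - 1) (δ_v - 1)`, as
`δ_v = m S + m - 1`. Hence `c(v) = (m - 1) / δ_v`, and multiplying numerator and denominator by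
`m - 1` turns the geometric sum into the closed form of the theorem.
-/


/-- Rule (1): the two vertices agree on the first `k-1` coordinates and differ
(hence differ in the last coordinate). -/
def rule1 {n k : ℕ} (x y : Fin k → ZMod n) : Prop :=
  x ≠ y ∧ ∀ j : Fin k, (j : ℕ) + 1 < k → x j = y j

/-- Rule (2): `x = x_1…x_i 0…0` and `y = x_1…x_i x_{i+1}…x_k` with `x_j ≠ 0` for
`i+1 ≤ j ≤ k`, where `0 ≤ i ≤ k-2` (`i` is the length of the shared prefix,
0-indexed coordinates `≥ i` are zero on the `x` side and nonzero on the `y` side). -/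
def rule2 {n k : ℕ} (x y : Fin k → ZMod n) : Prop :=
  ∃ i : ℕ, i + 2 ≤ k ∧ (∀ j : Fin k, (j : ℕ) < i → x j = y j) ∧
    (∀ j : Fin k, i ≤ (j : ℕ) → x j = 0) ∧ (∀ j : Fin k, i ≤ (j : ℕ) → y j ≠ 0)

/-- Rule (3): `x = x_1…x_{i-1} x_i 0…0` and `y = x_1…x_{i-1} y_i 0…0` with
`x_i, y_i ≠ 0`, `x_i ≠ y_i` and `1 ≤ i ≤ k-1` (here `p` is the 0-indexed
position `i-1`, so `p ≤ k-2`). -/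
def rule3 {n k : ℕ} (x y : Fin k → ZMod n) : Prop :=
  ∃ p : Fin k, (p : ℕ) + 2 ≤ k ∧ (∀ j : Fin k, j < p → x j = y j) ∧
    x p ≠ 0 ∧ y p ≠ 0 ∧ x p ≠ y p ∧ (∀ j : Fin k, p < j → x j = 0 ∧ y j = 0)

/-- The hierarchical graph `H_{n,k}` on the vertex set `(Z_n)^k`, whose adjacency
is given exactly by the three rules above. -/
def hierGraph (n k : ℕ) : SimpleGraph (Fin k → ZMod n) :=
  SimpleGraph.fromRel (fun x y => rule1 x y ∨ rule2 x y ∨ rule3 x y)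

/-- The root vertex `00…0` of `H_{n,k}`. -/
def hierRoot (n k : ℕ) : Fin k → ZMod n := fun _ => 0

/-- The set of peripheral vertices of `H_{n,k}`: those all of whose coordinates
are nonzero. -/
def peripheral (n k : ℕ) : Set (Fin k → ZMod n) := {v | ∀ j, v j ≠ 0}

/-- The minimum graph distance from a vertex to a set of vertices. -/
noncomputable def distToSet {V : Type*} (G : SimpleGraph V) (v : V) (S : Set V) : ℕ :=
  sInf (G.dist v '' S)

/-- The eccentricity of a vertex: the maximum graph distance from it to any vertex. -/
noncomputable def eccentricity {V : Type*} (G : SimpleGraph V) (v : V) : ℕ :=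
  sSup (Set.range (G.dist v))

/-- The radius of a graph: the minimum eccentricity over all vertices. -/
noncomputable def graphRadius {V : Type*} (G : SimpleGraph V) : ℕ :=
  sInf (Set.range (eccentricity G))

/-- The degree of a vertex, as the number of its neighbors. -/
noncomputable def vdeg {V : Type*} (G : SimpleGraph V) (v : V) : ℕ :=
  (G.neighborSet v).ncard

/-- `ε_v`: the number of edges of the graph both of whose endpoints are
neighbors of `v`. -/
noncomputable def localEdges {V : Type*} (G : SimpleGraph V) (v : V) : ℕ :=
  {e : Sym2 V | e ∈ G.edgeSet ∧ ∀ w ∈ e, G.Adj v w}.ncard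

/-- The clustering coefficient `c(v) = 2 ε_v / (δ_v (δ_v - 1))` of a vertex `v`. -/
noncomputable def clustering {V : Type*} (G : SimpleGraph V) (v : V) : ℚ :=
  (2 * (localEdges G v : ℚ)) / ((vdeg G v : ℚ) * ((vdeg G v : ℚ) - 1))

/-- The vertex `z^{01} = 0101…` (1-indexed: 0 at odd positions, 1 at even). -/
def z01 (n k : ℕ) : Fin k → ZMod n := fun j => if (j : ℕ) % 2 = 0 then 0 else 1

/-- The vertex `z^{10} = 1010…` (1-indexed: 1 at odd positions, 0 at even). -/
def z10 (n k : ℕ) : Fin k → ZMod n := fun j => if (j : ℕ) % 2 = 0 then 1 else 0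

/-- `w` is a descendant of `v` at depth at least `i`: it agrees with `v` on the first `t`
coordinates and is nonzero on all the others, for some `i ≤ t < k`. -/
def IsDesc {n k : ℕ} (i : ℕ) (v w : Fin k → ZMod n) : Prop :=
  ∃ t, i ≤ t ∧ t < k ∧ (∀ j : Fin k, (j : ℕ) < t → w j = v j) ∧
    ∀ j : Fin k, t ≤ (j : ℕ) → w j ≠ 0

/-- `w` is a sibling of `v` at position `p`: it is obtained from `v` by replacing the coordinate
at `p` by a different nonzero value. -/
def IsSib {n k : ℕ} (p : Fin k) (v w : Fin k → ZMod n) : Prop :=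
  ∃ b, b ≠ 0 ∧ b ≠ v p ∧ w = Function.update v p b

/-! ### Local edges and degree sums -/

/-- The edges of `G` both of whose endpoints are neighbours of `v`, as a graph on all of `V`. -/
def linkGraph {V : Type*} (G : SimpleGraph V) (v : V) : SimpleGraph V where
  Adj x y := G.Adj x y ∧ G.Adj v x ∧ G.Adj v y
  symm := ⟨fun _ _ h => ⟨h.1.symm, h.2.2, h.2.1⟩⟩
  loopless := ⟨fun _ h => h.1.ne rfl⟩

lemma localEdges_eq {V : Type*} (G : SimpleGraph V) (v : V) :
    localEdges G v = (linkGraph G v).edgeSet.ncard := by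
  unfold localEdges
  congr 1
  ext e
  induction e using Sym2.ind with
  | _ x y => simp [linkGraph]

lemma two_mul_localEdges {V : Type*} [Fintype V] (G : SimpleGraph V) (v : V) :
    2 * localEdges G v = ∑ x, ((linkGraph G v).neighborSet x).ncard := by
  classical
  rw [localEdges_eq, Set.ncard_eq_toFinset_card']
  have := (linkGraph G v).sum_degrees_eq_twice_card_edges
  rw [SimpleGraph.edgeFinset] at this
  rw [← this]
  refine Finset.sum_congr rfl fun x _ => ?_
  rw [Set.ncard_eq_toFinset_card', SimpleGraph.degree, SimpleGraph.neighborFinset]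

section

variable {n k i : ℕ} {v w x y : Fin k → ZMod n} {p l : Fin k}

/-! ### The adjacency rules -/

lemma hierGraph_adj : (hierGraph n k).Adj x y ↔
    x ≠ y ∧ ((rule1 x y ∨ rule2 x y ∨ rule3 x y) ∨ (rule1 y x ∨ rule2 y x ∨ rule3 y x)) := by
  simp [hierGraph]

lemma rule1.symm (h : rule1 x y) : rule1 y x :=
  ⟨h.1.symm, fun j hj => (h.2 j hj).symm⟩

lemma rule3.symm (h : rule3 x y) : rule3 y x := by
  obtain ⟨q, h1, h2, h3, h4, h5, h6⟩ := h
  exact ⟨q, h1, fun j hj => (h2 j hj).symm, h4, h3, h5.symm, fun j hj => (h6 j hj).symm⟩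

lemma hierGraph_adj' : (hierGraph n k).Adj x y ↔
    x ≠ y ∧ (rule1 x y ∨ rule2 x y ∨ rule2 y x ∨ rule3 x y) := by
  rw [hierGraph_adj]
  have h1 : rule1 y x → rule1 x y := rule1.symm
  have h3 : rule3 y x → rule3 x y := rule3.symm
  tauto

lemma IsDesc.last_ne (h : IsDesc i v w) (hl : (l : ℕ) + 1 = k) : w l ≠ 0 := by
  obtain ⟨t, h1, h2, h3, h4⟩ := h
  exact h4 l (by omega)

lemma IsDesc.apply_eq (h : IsDesc i v w) (hp : (p : ℕ) + 1 = i) : w p = v p := by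
  obtain ⟨t, h1, h2, h3, h4⟩ := h
  exact h3 p (by omega)

lemma rule2.last (h : rule2 x y) (hl : (l : ℕ) + 1 = k) : x l = 0 := by
  obtain ⟨q, h1, h2, h3, h4⟩ := h
  exact h3 l (by omega)

lemma rule3.last (h : rule3 x y) (hl : (l : ℕ) + 1 = k) : x l = 0 ∧ y l = 0 := by
  obtain ⟨q, h1, h2, h3, h4, h5, h6⟩ := h
  exact h6 l (Fin.lt_def.2 (by omega))

/-- In rule (2) every nonzero coordinate of `x` lies in the shared prefix, so `x` and `y` agree
there. -/
lemma rule2.apply_eq (h : rule2 x y) (hp : x p ≠ 0) : x p = y p := by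
  obtain ⟨q, h1, h2, h3, h4⟩ := h
  refine h2 p ?_
  by_contra hq
  exact hp (h3 p (by omega))

/-! ### The neighbourhood of `v` and its cliques -/

/-- The neighbours of `v` are its descendants and its siblings. -/
lemma adj_iff (hp : (p : ℕ) + 1 = i) (hik : i + 1 ≤ k) (hvp : v p ≠ 0)
    (hvz : ∀ j : Fin k, i ≤ (j : ℕ) → v j = 0) :
    (hierGraph n k).Adj v w ↔ IsDesc i v w ∨ IsSib p v w := by
  obtain ⟨l, hl⟩ : ∃ l : Fin k, (l : ℕ) + 1 = k := ⟨⟨k - 1, by omega⟩, by simp; omega⟩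
  rw [hierGraph_adj']
  constructor
  · rintro ⟨hne, h | h | h | h⟩
    · left
      refine ⟨k - 1, by omega, by omega, fun j hj => (h.2 j (by omega)).symm, fun j hj h0 => ?_⟩
      apply hne
      funext j'
      by_cases hj' : (j' : ℕ) + 1 < k
      · exact h.2 j' hj'
      · have : j' = j := Fin.ext (by omega)
        rw [this, h0, hvz j (by omega)]
    · left
      obtain ⟨q, h1, h2, h3, h4⟩ := h
      refine ⟨q, ?_, by omega, fun j hj => (h2 j hj).symm, h4⟩
      by_contra hq
      exact hvp (h3 p (by omega))
    · exfalso
      obtain ⟨q, h1, h2, h3, h4⟩ := h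
      exact h4 l (by omega) (hvz l (by omega))
    · right
      obtain ⟨q, h1, h2, h3, h4, h5, h6⟩ := h
      -- the last nonzero coordinate of `v` is the one at `p`
      have hq : q = p := by
        apply le_antisymm
        · by_contra hc
          exact h3 (hvz q (by have := Fin.lt_def.1 (not_le.1 hc); omega))
        · by_contra hc
          exact hvp (h6 p (not_le.1 hc)).1
      subst hq
      refine ⟨w q, h4, h5.symm, ?_⟩
      funext j
      rcases lt_trichotomy j q with hj | hj | hj
      · rw [Function.update_of_ne hj.ne, h2 j hj]
      · rw [hj, Function.update_self]
      · rw [Function.update_of_ne hj.ne', (h6 j hj).1, (h6 j hj).2]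
  · rintro (h | ⟨b, hb0, hb, rfl⟩)
    · have hne : v ≠ w := fun he => h.last_ne hl (by rw [← he, hvz l (by omega)])
      refine ⟨hne, ?_⟩
      obtain ⟨t, h1, h2, h3, h4⟩ := h
      by_cases ht : t + 1 = k
      · exact Or.inl ⟨hne, fun j hj => (h3 j (by omega)).symm⟩
      · exact Or.inr (Or.inl ⟨t, by omega, fun j hj => (h3 j hj).symm,
          fun j hj => hvz j (by omega), h4⟩)
    · refine ⟨fun he => hb ?_, Or.inr (Or.inr (Or.inr ⟨p, by omega, ?_, hvp, ?_, ?_, ?_⟩))⟩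
      · rw [he, Function.update_self]
      · intro j hj
        rw [Function.update_of_ne hj.ne]
      · rwa [Function.update_self]
      · rw [Function.update_self]; exact hb.symm
      · intro j hj
        have := Fin.lt_def.1 hj
        rw [Function.update_of_ne hj.ne', hvz j (by omega)]
        simp

lemma not_adj_desc_sib (hp : (p : ℕ) + 1 = i) (hik : i + 1 ≤ k)
    (hx : IsDesc i v x) (hy : IsSib p v y) : ¬ (hierGraph n k).Adj x y := by
  obtain ⟨l, hl⟩ : ∃ l : Fin k, (l : ℕ) + 1 = k := ⟨⟨k - 1, by omega⟩, by simp; omega⟩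
  obtain ⟨b, hb0, hb, rfl⟩ := hy
  have hxl := hx.last_ne hl
  have hxp := hx.apply_eq hp
  rw [hierGraph_adj']
  rintro ⟨-, h | h | h | h⟩
  · have := h.2 p (by omega)
    rw [hxp, Function.update_self] at this
    exact hb this.symm
  · exact hxl (h.last hl)
  · have := h.apply_eq (p := p) (by rwa [Function.update_self])
    rw [hxp, Function.update_self] at this
    exact hb this
  · exact hxl (h.last hl).1

/-- The clique of a descendant `x`: the vertices differing from it in the last coordinate only,
with a nonzero last coordinate. -/
lemma link_desc (hp : (p : ℕ) + 1 = i) (hik : i + 1 ≤ k) (hvp : v p ≠ 0)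
    (hvz : ∀ j : Fin k, i ≤ (j : ℕ) → v j = 0) (hl : (l : ℕ) + 1 = k) (hx : IsDesc i v x) :
    (linkGraph (hierGraph n k) v).neighborSet x =
      (fun b => Function.update x l b) '' {b | b ≠ 0 ∧ b ≠ x l} := by
  have hxl := hx.last_ne hl
  ext y
  simp only [SimpleGraph.mem_neighborSet, linkGraph, Set.mem_image, Set.mem_ofPred_eq]
  rw [adj_iff (w := x) hp hik hvp hvz, adj_iff (w := y) hp hik hvp hvz]
  constructor
  · rintro ⟨h, -, hy | hy⟩
    · rw [hierGraph_adj'] at h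
      obtain ⟨hne, h | h | h | h⟩ := h
      · have key : Function.update x l (y l) = y := by
          funext j
          by_cases hj : j = l
          · rw [hj, Function.update_self]
          · rw [Function.update_of_ne hj]
            refine h.2 j ?_
            have : (j : ℕ) ≠ l := fun h => hj (Fin.ext h)
            omega
        refine ⟨y l, ⟨hy.last_ne hl, fun he => hne ?_⟩, key⟩
        rw [he, Function.update_eq_self] at key
        exact key
      · exact absurd (h.last hl) hxl
      · exact absurd (h.last hl) (hy.last_ne hl)
      · exact absurd (h.last hl).1 hxl
    · exact absurd h (not_adj_desc_sib hp hik hx hy)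
  · rintro ⟨b, ⟨hb0, hb⟩, rfl⟩
    have hne : x ≠ Function.update x l b := fun he => hb (by rw [he, Function.update_self])
    refine ⟨hierGraph_adj'.2 ⟨hne, Or.inl ⟨hne, fun j hj => ?_⟩⟩, Or.inl hx, Or.inl ?_⟩
    · rw [Function.update_of_ne]
      rintro rfl
      omega
    · obtain ⟨t, h1, h2, h3, h4⟩ := hx
      refine ⟨t, h1, h2, fun j hj => ?_, fun j hj => ?_⟩
      · rw [Function.update_of_ne, h3 j hj]
        rintro rfl
        omega
      · by_cases hjl : j = l
        · rwa [hjl, Function.update_self]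
        · rw [Function.update_of_ne hjl]; exact h4 j hj

/-- The clique of a sibling `x`: all the other siblings. -/
lemma link_sib (hp : (p : ℕ) + 1 = i) (hik : i + 1 ≤ k) (hvp : v p ≠ 0)
    (hvz : ∀ j : Fin k, i ≤ (j : ℕ) → v j = 0) (hx : IsSib p v x) :
    (linkGraph (hierGraph n k) v).neighborSet x =
      (fun b => Function.update v p b) '' {b | b ≠ 0 ∧ b ≠ v p ∧ b ≠ x p} := by
  ext y
  simp only [SimpleGraph.mem_neighborSet, linkGraph, Set.mem_image, Set.mem_ofPred_eq]
  rw [adj_iff (w := x) hp hik hvp hvz, adj_iff (w := y) hp hik hvp hvz]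
  constructor
  · rintro ⟨h, -, hy | hy⟩
    · exact absurd h.symm (not_adj_desc_sib hp hik hy hx)
    · obtain ⟨b, hb0, hb, rfl⟩ := hy
      obtain ⟨c, hc0, hc, rfl⟩ := hx
      refine ⟨b, ⟨hb0, hb, ?_⟩, rfl⟩
      rw [Function.update_self]
      rintro rfl
      exact h.ne rfl
  · rintro ⟨b, ⟨hb0, hb, hbx⟩, rfl⟩
    refine ⟨?_, Or.inr hx, Or.inr ⟨b, hb0, hb, rfl⟩⟩
    obtain ⟨c, hc0, hc, rfl⟩ := hx
    rw [Function.update_self] at hbx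
    rw [hierGraph_adj']
    refine ⟨fun he => hbx ?_, Or.inr (Or.inr (Or.inr ⟨p, by omega, ?_, ?_, ?_, ?_, ?_⟩))⟩
    · have := congrFun he p
      simpa using this.symm
    · intro j hj
      rw [Function.update_of_ne hj.ne, Function.update_of_ne hj.ne]
    · rwa [Function.update_self]
    · rwa [Function.update_self]
    · rw [Function.update_self, Function.update_self]; exact hbx.symm
    · intro j hj
      have := Fin.lt_def.1 hj
      rw [Function.update_of_ne hj.ne', Function.update_of_ne hj.ne', hvz j (by omega)]
      simp

/-! ### Counting -/

lemma ncard_update (v : Fin k → ZMod n) (p : Fin k) (s : Set (ZMod n)) :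
    ((fun b => Function.update v p b) '' s).ncard = s.ncard :=
  Set.ncard_image_of_injective _ (Function.update_injective v p)

lemma ncard_ne_two [NeZero n] {a : ZMod n} (ha : a ≠ 0) :
    {b : ZMod n | b ≠ 0 ∧ b ≠ a}.ncard = n - 2 := by
  have : {b : ZMod n | b ≠ 0 ∧ b ≠ a} = (({0, a} : Finset (ZMod n))ᶜ : Finset (ZMod n)) := by
    ext; simp; tauto
  rw [this, Set.ncard_coe_finset, Finset.card_compl, Finset.card_pair ha.symm, ZMod.card]

lemma ncard_ne_three [NeZero n] {a c : ZMod n} (ha : a ≠ 0) (hc : c ≠ 0) (hca : c ≠ a) :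
    {b : ZMod n | b ≠ 0 ∧ b ≠ a ∧ b ≠ c}.ncard = n - 3 := by
  have : {b : ZMod n | b ≠ 0 ∧ b ≠ a ∧ b ≠ c} =
      (({0, a, c} : Finset (ZMod n))ᶜ : Finset (ZMod n)) := by
    ext; simp; tauto
  rw [this, Set.ncard_coe_finset, Finset.card_compl,
    Finset.card_eq_three.2 ⟨0, a, c, ha.symm, hc.symm, hca.symm, rfl⟩, ZMod.card]

lemma ncard_sib [NeZero n] (hvp : v p ≠ 0) : {w | IsSib p v w}.ncard = n - 2 := by
  have : {w | IsSib p v w} = (fun b => Function.update v p b) '' {b | b ≠ 0 ∧ b ≠ v p} := by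
    ext w
    simp only [IsSib, Set.mem_image, Set.mem_ofPred_eq]
    exact ⟨fun ⟨b, h0, h1, h2⟩ => ⟨b, ⟨h0, h1⟩, h2.symm⟩, fun ⟨b, ⟨h0, h1⟩, h2⟩ =>
      ⟨b, h0, h1, h2.symm⟩⟩
  rw [this, ncard_update, ncard_ne_two hvp]

/-- The descendants of `v` (`IsDesc`) with a prescribed length `t` of the part shared with `v`. -/
def descFinset [NeZero n] (v : Fin k → ZMod n) (t : ℕ) : Finset (Fin k → ZMod n) :=
  Fintype.piFinset fun j : Fin k => if (j : ℕ) < t then {v j} else Finset.univ.erase 0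

lemma mem_descFinset [NeZero n] {t : ℕ} : w ∈ descFinset v t ↔
    (∀ j : Fin k, (j : ℕ) < t → w j = v j) ∧ ∀ j : Fin k, t ≤ (j : ℕ) → w j ≠ 0 := by
  rw [descFinset, Fintype.mem_piFinset]
  constructor
  · intro h
    refine ⟨fun j hj => ?_, fun j hj => ?_⟩
    · simpa [hj] using h j
    · simpa [not_lt.2 hj] using h j
  · rintro ⟨h1, h2⟩ j
    by_cases hj : (j : ℕ) < t
    · simpa [hj] using h1 j hj
    · simpa [hj] using h2 j (not_lt.1 hj)

lemma card_descFinset [NeZero n] {t : ℕ} (ht : t ≤ k) :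
    (descFinset v t).card = (n - 1) ^ (k - t) := by
  rw [descFinset, Fintype.card_piFinset]
  have : ∀ j : Fin k, (if (j : ℕ) < t then ({v j} : Finset (ZMod n))
      else Finset.univ.erase 0).card = (fun j : ℕ => if j < t then 1 else n - 1) j := by
    intro j
    by_cases hj : (j : ℕ) < t <;> simp [hj, ZMod.card]
  rw [Finset.prod_congr rfl fun j _ => this j,
    Fin.prod_univ_eq_prod_range (fun j : ℕ => if j < t then 1 else n - 1) k,
    ← Finset.prod_range_mul_prod_Ico _ ht, Finset.prod_eq_one, one_mul,
    Finset.prod_congr rfl (g := fun _ => n - 1), Finset.prod_const, Nat.card_Ico]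
  · intro j hj
    simp [not_lt.2 (Finset.mem_Ico.1 hj).1]
  · intro j hj
    simp [Finset.mem_range.1 hj]

lemma ncard_desc [NeZero n] (hvz : ∀ j : Fin k, i ≤ (j : ℕ) → v j = 0) (hik : i ≤ k) :
    {w | IsDesc i v w}.ncard = (n - 1) * ∑ r ∈ Finset.range (k - i), (n - 1) ^ r := by
  have hU : {w | IsDesc i v w} =
      ((Finset.Ico i k).biUnion (descFinset v) : Finset (Fin k → ZMod n)) := by
    ext w
    simp only [Set.mem_ofPred_eq, Finset.coe_biUnion, Set.mem_iUnion, Finset.mem_coe,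
      mem_descFinset, Finset.mem_Ico, IsDesc]
    exact ⟨fun ⟨t, a, b, c, d⟩ => ⟨t, ⟨a, b⟩, c, d⟩, fun ⟨t, ⟨a, b⟩, c, d⟩ => ⟨t, a, b, c, d⟩⟩
  -- for `s < t` the coordinate at `s` is zero on one side and nonzero on the other
  have hlt : ∀ s t, i ≤ s → s < t → t < k → Disjoint (descFinset v s) (descFinset v t) := by
    intro s t his hst htk
    rw [Finset.disjoint_left]
    intro w h1 h2
    rw [mem_descFinset] at h1 h2
    refine h1.2 ⟨s, by omega⟩ le_rfl ?_
    rw [h2.1 ⟨s, by omega⟩ hst, hvz ⟨s, by omega⟩ his]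
  rw [hU, Set.ncard_coe_finset, Finset.card_biUnion]
  · rw [Finset.sum_congr rfl fun t ht => card_descFinset (Finset.mem_Ico.1 ht).2.le,
      Finset.sum_Ico_eq_sum_range, ← Finset.sum_range_reflect, Finset.mul_sum]
    refine Finset.sum_congr rfl fun r hr => ?_
    have := Finset.mem_range.1 hr
    rw [← pow_succ']
    congr 1
    omega
  · intro s hs t ht hst
    rw [Finset.mem_coe, Finset.mem_Ico] at hs ht
    rcases lt_or_gt_of_ne hst with h | h
    · exact hlt s t hs.1 h ht.2
    · exact (hlt t s ht.1 h hs.2).symm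

lemma desc_sib_disjoint (hp : (p : ℕ) + 1 = i) (hx : IsDesc i v x) : ¬ IsSib p v x := by
  rintro ⟨b, -, hb, rfl⟩
  have := hx.apply_eq hp
  rw [Function.update_self] at this
  exact hb this

lemma vdeg_eq [NeZero n] (hp : (p : ℕ) + 1 = i) (hik : i + 1 ≤ k) (hvp : v p ≠ 0)
    (hvz : ∀ j : Fin k, i ≤ (j : ℕ) → v j = 0) :
    vdeg (hierGraph n k) v = {w | IsDesc i v w}.ncard + {w | IsSib p v w}.ncard := by
  have hdisj : Disjoint {w | IsDesc i v w} {w | IsSib p v w} :=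
    Set.disjoint_left.2 fun w h1 h2 => desc_sib_disjoint hp h1 h2
  rw [← Set.ncard_union_eq hdisj, vdeg]
  congr 1
  ext w
  exact adj_iff hp hik hvp hvz

lemma two_mul_localEdges_eq [NeZero n] (hp : (p : ℕ) + 1 = i) (hik : i + 1 ≤ k) (hvp : v p ≠ 0)
    (hvz : ∀ j : Fin k, i ≤ (j : ℕ) → v j = 0) :
    2 * localEdges (hierGraph n k) v =
      {w | IsDesc i v w}.ncard * (n - 2) + {w | IsSib p v w}.ncard * (n - 3) := by
  classical
  obtain ⟨l, hl⟩ : ∃ l : Fin k, (l : ℕ) + 1 = k := ⟨⟨k - 1, by omega⟩, by simp; omega⟩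
  rw [two_mul_localEdges]
  have key : ∀ x, ((linkGraph (hierGraph n k) v).neighborSet x).ncard =
      (if IsDesc i v x then n - 2 else 0) + (if IsSib p v x then n - 3 else 0) := by
    intro x
    by_cases hx : IsDesc i v x
    · rw [if_pos hx, if_neg (desc_sib_disjoint hp hx), link_desc hp hik hvp hvz hl hx,
        ncard_update, ncard_ne_two (hx.last_ne hl), add_zero]
    · by_cases hs : IsSib p v x
      · rw [if_neg hx, if_pos hs, link_sib hp hik hvp hvz hs, ncard_update, zero_add]
        obtain ⟨c, hc0, hc, rfl⟩ := hs
        rw [Function.update_self, ncard_ne_three hvp hc0 hc]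
      · rw [if_neg hx, if_neg hs, add_zero, Set.ncard_eq_zero, Set.eq_empty_iff_forall_notMem]
        rintro y ⟨-, h, -⟩
        rw [adj_iff hp hik hvp hvz] at h
        tauto
  simp only [key, Finset.sum_add_distrib, ← Finset.sum_filter, Finset.sum_const, smul_eq_mul]
  congr 2 <;> rw [← Set.ncard_coe_finset] <;> simp

end

/-- for `n ≥ 3`, a vertex `v = x_1…x_i 0…0` with `x_i ≠ 0` and
`1 ≤ i ≤ k-1` has clustering coefficient
`(n-2)^2 / ((n-1)^{k-i+1} + (n-1)^2 - 3n + 4)`. -/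
theorem hierGraph_clustering_subroot (n k : ℕ) (hn : 3 ≤ n) (i : ℕ) (hi1 : 1 ≤ i)
    (hik : i + 1 ≤ k) (v : Fin k → ZMod n)
    (hvi : v ⟨i - 1, by omega⟩ ≠ 0)
    (hvz : ∀ j : Fin k, i ≤ (j : ℕ) → v j = 0) :
    clustering (hierGraph n k) v =
      ((n : ℚ) - 2) ^ 2 /
        (((n : ℚ) - 1) ^ (k - i + 1) + ((n : ℚ) - 1) ^ 2 - 3 * (n : ℚ) + 4) := by
  have : NeZero n := ⟨by omega⟩
  have hp : ((⟨i - 1, by omega⟩ : Fin k) : ℕ) + 1 = i := Nat.sub_add_cancel hi1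
  have hdeg := vdeg_eq hp hik hvi hvz
  have heps := two_mul_localEdges_eq hp hik hvi hvz
  rw [ncard_desc hvz (by omega), ncard_sib hvi] at hdeg heps
  -- substituting `n = m + 3` and `k - i = L + 1` removes the truncated subtractions
  obtain ⟨m, rfl⟩ : ∃ m, n = m + 3 := ⟨n - 3, by omega⟩
  obtain ⟨L, hL⟩ : ∃ L, k - i = L + 1 := ⟨k - i - 1, by omega⟩
  rw [hL] at hdeg heps ⊢
  have e1 : m + 3 - 1 = m + 2 := rfl
  have e2 : m + 3 - 2 = m + 1 := rfl
  have e3 : m + 3 - 3 = m := rfl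
  rw [e1, e2] at hdeg heps
  rw [e3] at heps
  have hgeom := geom_sum_mul ((m : ℚ) + 2) (L + 1)
  have hS : 1 ≤ ∑ r ∈ Finset.range (L + 1), ((m : ℚ) + 2) ^ r := by
    rw [Finset.sum_range_succ', pow_zero]
    have : 0 ≤ ∑ r ∈ Finset.range L, ((m : ℚ) + 2) ^ (r + 1) :=
      Finset.sum_nonneg fun r _ => by positivity
    linarith
  have hdegQ := congrArg (Nat.cast : ℕ → ℚ) hdeg
  have hepsQ := congrArg (Nat.cast : ℕ → ℚ) heps
  push_cast at hdegQ hepsQ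
  set S : ℚ := ∑ r ∈ Finset.range (L + 1), ((m : ℚ) + 2) ^ r
  have hm : (0 : ℚ) ≤ m := Nat.cast_nonneg m
  have hden : (((m + 3 : ℕ) : ℚ) - 1) ^ (L + 1 + 1) + (((m + 3 : ℕ) : ℚ) - 1) ^ 2
      - 3 * ((m + 3 : ℕ) : ℚ) + 4 = ((m : ℚ) + 1) * ((m + 2) * S + (m + 1)) := by
    have h2 : ((m + 3 : ℕ) : ℚ) - 1 = m + 2 := by push_cast; ring
    rw [h2, pow_succ]
    push_cast
    linear_combination (-(m : ℚ) - 2) * hgeom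
  have hmS : 0 ≤ (m : ℚ) * S := by positivity
  have hd1 : ((m : ℚ) + 2) * S + (m + 1) ≠ 0 := by nlinarith
  have hd2 : ((m : ℚ) + 2) * S + (m + 1) - 1 ≠ 0 := by nlinarith
  have hd3 : (m : ℚ) + 1 ≠ 0 := by positivity
  rw [clustering, hden, hepsQ, hdegQ, div_eq_div_iff (mul_ne_zero hd1 hd2) (mul_ne_zero hd3 hd1)]
  push_cast
  ring
end

section
/- Assume n ≥ 3. Let 1 ≤ i ≤ k−1 and let v be a vertex of the hierarchical graph H_{n,k} whose i-th coordinate is 0 and whose coordinates x_{i+1}, …, x_k are all nonzero. Then the clustering coefficient of v equals ((n−1)^2 + (2k−2i−3)(n−1) + 2 + 2i − 2k) / ((n+k−i−2)(n+k−i−3)), as an equality of rational numbers. -/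
/-! ### Edges in the join of a clique and an independent set -/

/-- A vertex whose neighborhood is the disjoint union of a clique `A` and an independent set `B`,
with all edges between them, has `|A|(|A|-1)/2 + |A||B|` edges among its neighbors. -/
theorem two_mul_localEdges_of_clique_join_indep {V : Type*} [DecidableEq V] (G : SimpleGraph V)
    (v : V) (A B : Finset V) (hN : ∀ w, G.Adj v w ↔ w ∈ A ∨ w ∈ B)
    (hAA : ∀ a ∈ A, ∀ b ∈ A, a ≠ b → G.Adj a b) (hAB : ∀ a ∈ A, ∀ b ∈ B, G.Adj a b)
    (hBB : ∀ a ∈ B, ∀ b ∈ B, ¬ G.Adj a b) (hd : Disjoint A B) :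
    2 * localEdges G v = A.card * (A.card - 1) + 2 * (A.card * B.card) := by
  have hset : {e : Sym2 V | e ∈ G.edgeSet ∧ ∀ w ∈ e, G.Adj v w} =
      ((A.offDiag.image (fun p => s(p.1, p.2)) ∪
        (A ×ˢ B).image (fun p => s(p.1, p.2)) : Finset (Sym2 V)) : Set (Sym2 V)) := by
    ext e
    induction e using Sym2.ind with
    | _ a b =>
      simp only [Set.mem_ofPred_eq, SimpleGraph.mem_edgeSet, Sym2.mem_iff, forall_eq_or_imp,
        forall_eq, hN, Finset.coe_union, Finset.coe_image, Set.mem_union, Set.mem_image,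
        Finset.mem_coe, Finset.mem_offDiag, Finset.mem_product, Prod.exists, Sym2.eq_iff]
      constructor
      · rintro ⟨hab, ha | ha, hb | hb⟩
        · exact Or.inl ⟨a, b, ⟨ha, hb, hab.ne⟩, by simp⟩
        · exact Or.inr ⟨a, b, ⟨ha, hb⟩, by simp⟩
        · exact Or.inr ⟨b, a, ⟨hb, ha⟩, by simp⟩
        · exact absurd hab (hBB a ha b hb)
      · rintro (⟨x, y, ⟨hx, hy, hxy⟩, (⟨rfl, rfl⟩ | ⟨rfl, rfl⟩)⟩ |
          ⟨x, y, ⟨hx, hy⟩, (⟨rfl, rfl⟩ | ⟨rfl, rfl⟩)⟩)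
        · exact ⟨hAA _ hx _ hy hxy, Or.inl hx, Or.inl hy⟩
        · exact ⟨(hAA _ hx _ hy hxy).symm, Or.inl hy, Or.inl hx⟩
        · exact ⟨hAB _ hx _ hy, Or.inl hx, Or.inr hy⟩
        · exact ⟨(hAB _ hx _ hy).symm, Or.inr hy, Or.inl hx⟩
  have hdisj : Disjoint (A.offDiag.image (fun p => s(p.1, p.2)))
      ((A ×ˢ B).image (fun p => s(p.1, p.2))) := by
    rw [Finset.disjoint_left] at hd ⊢
    simp only [Finset.mem_image, Finset.mem_offDiag, Finset.mem_product, Prod.exists]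
    rintro e ⟨a, b, ⟨ha, hb, -⟩, rfl⟩ ⟨x, y, ⟨hx, hy⟩, h⟩
    rcases Sym2.eq_iff.1 h with ⟨rfl, rfl⟩ | ⟨rfl, rfl⟩
    · exact hd hb hy
    · exact hd ha hy
  have hprod : ((A ×ˢ B).image (fun p => s(p.1, p.2))).card = A.card * B.card := by
    rw [Finset.card_image_of_injOn, Finset.card_product]
    rintro ⟨a, b⟩ h1 ⟨x, y⟩ h2 h
    simp only [Finset.coe_product, Set.mem_prod, Finset.mem_coe] at h1 h2
    rcases Sym2.eq_iff.1 h with ⟨rfl, rfl⟩ | ⟨rfl, rfl⟩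
    · rfl
    · exact absurd h2.2 (Finset.disjoint_left.1 hd h1.1)
  have hoff : 2 * (A.offDiag.image (fun p => s(p.1, p.2))).card = A.card * (A.card - 1) := by
    have h := Sym2.two_mul_card_image_offDiag A
    rw [Finset.offDiag_card] at h
    rw [Nat.mul_sub_one]
    exact h
  rw [localEdges, hset, Set.ncard_coe_finset, Finset.card_union_of_disjoint hdisj, hprod, mul_add,
    hoff]

/-! ### Truncations and adjacency in `H_{n,k}` -/

/-- The vertex obtained from `x` by setting all (0-indexed) coordinates `≥ t` to zero. -/
def truncate {n k : ℕ} (x : Fin k → ZMod n) (t : ℕ) : Fin k → ZMod n :=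
  fun j => if (j : ℕ) < t then x j else 0

theorem truncate_of_lt {n k t : ℕ} (x : Fin k → ZMod n) {j : Fin k} (h : (j : ℕ) < t) :
    truncate x t j = x j := if_pos h

theorem truncate_of_le {n k t : ℕ} (x : Fin k → ZMod n) {j : Fin k} (h : t ≤ (j : ℕ)) :
    truncate x t j = 0 := if_neg (by omega)

/-- The neighbors of a vertex with nonzero last coordinate come from rule (1), or from rule (2) by
zeroing a nonzero tail. -/
theorem hierGraph_adj_iff {n k : ℕ} (l : Fin k) (hl : (l : ℕ) + 1 = k) (x y : Fin k → ZMod n)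
    (hx : x l ≠ 0) :
    (hierGraph n k).Adj x y ↔ (∃ c, c ≠ x l ∧ y = Function.update x l c) ∨
      ∃ t, t + 2 ≤ k ∧ (∀ j : Fin k, t ≤ (j : ℕ) → x j ≠ 0) ∧ y = truncate x t := by
  -- the shape forced on `y` by rule (1), in either direction
  have h1 : ∀ y : Fin k → ZMod n, x ≠ y → (∀ j : Fin k, (j : ℕ) + 1 < k → y j = x j) →
      ∃ c, c ≠ x l ∧ y = Function.update x l c := by
    intro y hne h
    have hy : y = Function.update x l (y l) := by
      funext j
      by_cases hj : j = l
      · subst hj; simp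
      · rw [Function.update_of_ne hj]
        have : (j : ℕ) ≠ l := fun h => hj (Fin.ext h)
        exact h j (by omega)
    refine ⟨y l, fun h => hne ?_, hy⟩
    rw [hy, h, Function.update_eq_self]
  have key : rule2 y x ↔
      ∃ t, t + 2 ≤ k ∧ (∀ j : Fin k, t ≤ (j : ℕ) → x j ≠ 0) ∧ y = truncate x t := by
    constructor
    · rintro ⟨t, ht, h, h0, hn⟩
      refine ⟨t, ht, hn, funext fun j => ?_⟩
      rcases lt_or_ge (j : ℕ) t with hj | hj
      · rw [truncate_of_lt x hj, h j hj]
      · rw [truncate_of_le x hj, h0 j hj]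
    · rintro ⟨t, ht, hn, rfl⟩
      exact ⟨t, ht, fun j hj => truncate_of_lt x hj, fun j hj => truncate_of_le x hj, hn⟩
  rw [hierGraph, SimpleGraph.fromRel_adj]
  constructor
  · rintro ⟨hne, (h | ⟨t, ht, -, h0, -⟩ | ⟨p, hp, -, -, -, -, h0⟩) |
      (h | h | ⟨p, hp, -, -, -, -, h0⟩)⟩
    · exact Or.inl (h1 y hne fun j hj => (h.2 j hj).symm)
    · exact absurd (h0 l (by omega)) hx
    · exact absurd (h0 l (Fin.lt_def.2 (by omega))).1 hx
    · exact Or.inl (h1 y hne h.2)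
    · exact Or.inr (key.1 h)
    · exact absurd (h0 l (Fin.lt_def.2 (by omega))).2 hx
  · rintro (⟨c, hc, rfl⟩ | h)
    · have hne : x ≠ Function.update x l c := fun h => hc (by
        have := congrFun h l
        rw [Function.update_self] at this
        exact this.symm)
      refine ⟨hne, Or.inl (Or.inl ⟨hne, fun j hj => ?_⟩)⟩
      rw [Function.update_of_ne]
      rintro rfl
      omega
    · refine ⟨?_, Or.inr (Or.inr (Or.inl (key.2 h)))⟩
      rintro rfl
      obtain ⟨t, ht, -, h⟩ := h
      exact hx (by rw [h, truncate_of_le _ (by omega)])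

/-- Truncations of one vertex are never adjacent: both end in zero, and they agree wherever both
are nonzero. -/
theorem hierGraph_not_adj_truncate {n k : ℕ} (l : Fin k) (hl : (l : ℕ) + 1 = k)
    (v : Fin k → ZMod n) {s t : ℕ} (hs : s < k) (ht : t < k) :
    ¬ (hierGraph n k).Adj (truncate v s) (truncate v t) := by
  have main : ∀ s t : ℕ, s < k → t < k →
      ¬ (rule1 (truncate v s) (truncate v t) ∨ rule2 (truncate v s) (truncate v t) ∨
        rule3 (truncate v s) (truncate v t)) := by
    rintro s t hs ht (⟨hne, h⟩ | ⟨u, hu, -, -, h⟩ | ⟨p, -, -, hp, hp', hne, -⟩)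
    · refine hne (funext fun j => ?_)
      by_cases hj : (j : ℕ) + 1 < k
      · exact h j hj
      · rw [truncate_of_le v (by omega), truncate_of_le v (by omega)]
    · exact h l (by omega) (truncate_of_le v (by omega))
    · simp only [truncate] at hp hp' hne
      split_ifs at hp hp' hne <;> simp_all
  rw [hierGraph, SimpleGraph.fromRel_adj]
  rintro ⟨-, h | h⟩
  · exact main s t hs ht h
  · exact main t s ht hs h

/-- Truncating at or before the last position forgets the last coordinate. -/
theorem truncate_update_last {n k t : ℕ} (l : Fin k) (v : Fin k → ZMod n) (c : ZMod n)
    (ht : t ≤ (l : ℕ)) : truncate (Function.update v l c) t = truncate v t := by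
  funext j
  rcases lt_or_ge (j : ℕ) t with hj | hj
  · rw [truncate_of_lt _ hj, truncate_of_lt _ hj, Function.update_of_ne]
    rintro rfl
    omega
  · rw [truncate_of_le _ hj, truncate_of_le _ hj]

/-- Truncating exactly the last coordinate is the rule (1) move to `0`. -/
theorem truncate_last {n k : ℕ} (l : Fin k) (hl : (l : ℕ) + 1 = k) (v : Fin k → ZMod n) :
    truncate v l = Function.update v l 0 := by
  funext j
  by_cases hj : j = l
  · subst hj; rw [truncate_of_le v le_rfl, Function.update_self]
  · have : (j : ℕ) ≠ l := fun h => hj (Fin.ext h)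
    rw [Function.update_of_ne hj, truncate_of_lt v (by omega)]

/-! ### The clustering coefficient -/

/-- for `n ≥ 3`, a vertex of `H_{n,k}` whose `i`-th coordinate is
`0` and whose coordinates `x_{i+1}, …, x_k` are all nonzero (`1 ≤ i ≤ k-1`) has
clustering coefficient
`((n-1)^2 + (2k-2i-3)(n-1) + 2 + 2i - 2k) / ((n+k-i-2)(n+k-i-3))`. -/
theorem hierGraph_clustering_subperipheral (n k : ℕ) (hn : 3 ≤ n) (i : ℕ)
    (hi1 : 1 ≤ i) (hik : i + 1 ≤ k) (v : Fin k → ZMod n)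
    (hvi : v ⟨i - 1, by omega⟩ = 0)
    (hvz : ∀ j : Fin k, i ≤ (j : ℕ) → v j ≠ 0) :
    clustering (hierGraph n k) v =
      (((n : ℚ) - 1) ^ 2 + (2 * (k : ℚ) - 2 * (i : ℚ) - 3) * ((n : ℚ) - 1) +
          2 + 2 * (i : ℚ) - 2 * (k : ℚ)) /
        (((n : ℚ) + (k : ℚ) - (i : ℚ) - 2) * ((n : ℚ) + (k : ℚ) - (i : ℚ) - 3)) := by
  classical
  have : NeZero n := ⟨by omega⟩
  let l : Fin k := ⟨k - 1, by omega⟩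
  have hl : (l : ℕ) + 1 = k := by simp only [l]; omega
  have hvl : v l ≠ 0 := hvz l (by omega)
  let C : Finset (ZMod n) := (Finset.univ.erase 0).erase (v l)
  have hC : ∀ c, c ∈ C ↔ c ≠ v l ∧ c ≠ 0 := by intro c; simp [C]
  let A : Finset (Fin k → ZMod n) := C.image (Function.update v l)
  let B : Finset (Fin k → ZMod n) := (Finset.Ico i k).image (truncate v)
  have hA : ∀ w, w ∈ A ↔ ∃ c, (c ≠ v l ∧ c ≠ 0) ∧ Function.update v l c = w := by
    intro w; simp only [A, Finset.mem_image, hC]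
  have hB : ∀ w, w ∈ B ↔ ∃ t, (i ≤ t ∧ t < k) ∧ truncate v t = w := by
    intro w; simp only [B, Finset.mem_image, Finset.mem_Ico]
  have hAcard : A.card = n - 2 := by
    rw [Finset.card_image_of_injective _ (Function.update_injective v l),
      Finset.card_erase_of_mem (by simpa using hvl), Finset.card_erase_of_mem (Finset.mem_univ _),
      Finset.card_univ, ZMod.card]
    omega
  have hBcard : B.card = k - i := by
    rw [Finset.card_image_of_injOn, Nat.card_Ico]
    -- if `s < t`, the two truncations differ at position `s`
    have main : ∀ s t : ℕ, i ≤ s → t < k → s < t → truncate v s ≠ truncate v t := by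
      intro s t hs ht hst h
      have h' := congrFun h ⟨s, by omega⟩
      rw [truncate_of_le v (le_refl s), truncate_of_lt v hst] at h'
      exact hvz ⟨s, by omega⟩ hs h'.symm
    intro s hs t ht h
    simp only [Finset.coe_Ico, Set.mem_Ico] at hs ht
    rcases lt_trichotomy s t with hst | hst | hst
    · exact absurd h (main s t hs.1 ht.2 hst)
    · exact hst
    · exact absurd h.symm (main t s ht.1 hs.2 hst)
  have hd : Disjoint A B := by
    rw [Finset.disjoint_left]
    intro w hwA hwB
    obtain ⟨c, ⟨-, hc0⟩, rfl⟩ := (hA w).1 hwA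
    obtain ⟨t, ht, h⟩ := (hB _).1 hwB
    have h' := congrFun h l
    rw [truncate_of_le v (by omega), Function.update_self] at h'
    exact hc0 h'.symm
  have hN : ∀ w, (hierGraph n k).Adj v w ↔ w ∈ A ∨ w ∈ B := by
    intro w
    rw [hierGraph_adj_iff l hl v w hvl, hA, hB]
    constructor
    · rintro (⟨c, hc, rfl⟩ | ⟨t, ht, hnz, rfl⟩)
      · by_cases hc0 : c = 0
        · exact Or.inr ⟨l, ⟨by omega, by omega⟩, by rw [hc0, truncate_last l hl]⟩
        · exact Or.inl ⟨c, ⟨hc, hc0⟩, rfl⟩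
      · refine Or.inr ⟨t, ⟨?_, by omega⟩, rfl⟩
        -- the zero at position `i - 1` cannot lie in a nonzero tail
        by_contra hti
        exact hnz ⟨i - 1, by omega⟩ (show t ≤ i - 1 by omega) hvi
    · rintro (⟨c, ⟨hc, -⟩, rfl⟩ | ⟨t, ht, rfl⟩)
      · exact Or.inl ⟨c, hc, rfl⟩
      · by_cases htk : t + 2 ≤ k
        · exact Or.inr ⟨t, htk, fun j hj => hvz j (by omega), rfl⟩
        · obtain rfl : t = (l : ℕ) := by omega
          exact Or.inl ⟨0, hvl.symm, truncate_last l hl v⟩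
  have hAA : ∀ a ∈ A, ∀ b ∈ A, a ≠ b → (hierGraph n k).Adj a b := by
    intro a ha b hb hab
    obtain ⟨c, ⟨-, hc0⟩, rfl⟩ := (hA a).1 ha
    obtain ⟨d, -, rfl⟩ := (hA b).1 hb
    rw [hierGraph_adj_iff l hl _ _ (by rwa [Function.update_self])]
    refine Or.inl ⟨d, ?_, by rw [Function.update_idem]⟩
    rw [Function.update_self]
    rintro rfl
    exact hab rfl
  have hAB : ∀ a ∈ A, ∀ b ∈ B, (hierGraph n k).Adj a b := by
    intro a ha b hb
    obtain ⟨c, ⟨-, hc0⟩, rfl⟩ := (hA a).1 ha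
    obtain ⟨t, ht, rfl⟩ := (hB b).1 hb
    rw [hierGraph_adj_iff l hl _ _ (by rwa [Function.update_self])]
    by_cases htk : t + 2 ≤ k
    · refine Or.inr ⟨t, htk, fun j hj => ?_, (truncate_update_last l v c (by omega)).symm⟩
      by_cases hjl : j = l
      · rw [hjl, Function.update_self]; exact hc0
      · rw [Function.update_of_ne hjl]; exact hvz j (by omega)
    · obtain rfl : t = (l : ℕ) := by omega
      refine Or.inl ⟨0, ?_, ?_⟩
      · rw [Function.update_self]; exact hc0.symm
      · rw [Function.update_idem, truncate_last l hl]
  have hBB : ∀ a ∈ B, ∀ b ∈ B, ¬ (hierGraph n k).Adj a b := by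
    intro a ha b hb
    obtain ⟨s, hs, rfl⟩ := (hB a).1 ha
    obtain ⟨t, ht, rfl⟩ := (hB b).1 hb
    exact hierGraph_not_adj_truncate l hl v hs.2 ht.2
  have hE := two_mul_localEdges_of_clique_join_indep (hierGraph n k) v A B hN hAA hAB hBB hd
  have hD : vdeg (hierGraph n k) v = (n - 2) + (k - i) := by
    have : (hierGraph n k).neighborSet v = ((A ∪ B : Finset _) : Set (Fin k → ZMod n)) := by
      ext w
      simp [hN]
    rw [vdeg, this, Set.ncard_coe_finset, Finset.card_union_of_disjoint hd, hAcard, hBcard]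
  rw [hAcard, hBcard] at hE
  -- `n = a + 3` and `k = i + m` make the natural-number subtractions exact
  obtain ⟨a, rfl⟩ : ∃ a, n = a + 3 := ⟨n - 3, by omega⟩
  obtain ⟨m, rfl⟩ : ∃ m, k = i + m := ⟨k - i, by omega⟩
  rw [show a + 3 - 2 = a + 1 by omega, show a + 1 - 1 = a by omega,
    show i + m - i = m by omega] at hE
  rw [show a + 3 - 2 = a + 1 by omega, show i + m - i = m by omega] at hD
  have hE' : 2 * (localEdges (hierGraph (a + 3) (i + m)) v : ℚ) =
      ((a : ℚ) + 1) * a + 2 * (((a : ℚ) + 1) * m) := by exact_mod_cast hE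
  rw [clustering, hE', hD]
  push_cast
  congr 1 <;> ring
end
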